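/- arXiv:1912.03132 — 2 statements merged into one kernel-verified Lean document; each statement's English description precedes it below -/
import Mathlib

section
/- Let N ≥ 2, δ ∈ (0,1), and let a be a Borel probability measure on [−1,1]^N ⊂ ℝ^N that is symmetric, i.e. invariant under the map q ↦ −q. Let û : ℝ^N → ℝ be four times continuously differentiable and suppose: (i) û(x + c𝟙) = û(x) + c for all x ∈ ℝ^N and c ∈ ℝ; (ii) û(x) ≤ max_i x_i + ((1−δ)/(2δ)) ∫ ⟨D²û(x)·q, q⟩ da(q) for all x; (iii) there is E₀ ≥ 0 with û(x) − max_i x_i ≤ E₀ for all x; (iv) there is K ≥ 0 with −D⁴û(y)[q,q,q,q] ≤ 24K for all y ∈ ℝ^N and all q in the support of a. Then for every x ∈ ℝ^N and every n ∈ ℕ, û(x) − E(n) ≤ g(x,n), where E(n) = (1−δ)^n E₀ + Σ_{τ=1}^n (1−δ)^τ K. -/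
open MeasureTheory Real

/-- The maximum coordinate `max_i x_i`. -/
noncomputable def vecMax {N : ℕ} (x : Fin N → ℝ) : ℝ := ⨆ i, x i

/-- Dynamic-programming value of the finite-horizon geometric-stopping expert game
against the adversary `a`: `g(x,0) = max_i x_i` and
`g(x,n+1) = δ max_i x_i + (1-δ) inf_{p ∈ Δ_N} Σ_i p_i ∫ g(x + q_i 𝟙 - q, n) da(q)`. -/
noncomputable def gVal {N : ℕ} (δ : ℝ) (a : Measure (Fin N → ℝ)) :
    ℕ → (Fin N → ℝ) → ℝ
  | 0 => fun x => vecMax x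
  | n + 1 => fun x =>
      δ * vecMax x + (1 - δ) *
        ⨅ p : stdSimplex ℝ (Fin N),
          ∑ i, (p : Fin N → ℝ) i * ∫ q, gVal δ a n (fun j => x j + q i - q j) ∂a


lemma aux_iter {N : ℕ} (u : (Fin N → ℝ) → ℝ) (hu : ContDiff ℝ 4 u) (x q : Fin N → ℝ)
    (k : ℕ) (hk : k ≤ 4) (t : ℝ) :
    iteratedDeriv k (fun s : ℝ => u (x + s • q)) t
      = iteratedFDeriv ℝ k u (x + t • q) (fun _ => q) := by
  have h1 : (fun s : ℝ => u (x + s • q))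
      = (fun z => u (x + z)) ∘ (ContinuousLinearMap.toSpanSingleton ℝ q) := by
    ext s; simp
  have hu' : ContDiff ℝ 4 (fun z => u (x + z)) := by fun_prop
  rw [iteratedDeriv_eq_iteratedFDeriv, h1,
    ContinuousLinearMap.iteratedFDeriv_comp_right _ hu' t (by exact_mod_cast hk)]
  simp [iteratedFDeriv_comp_add_left]

lemma aux_taylor1 (f : ℝ → ℝ) (hf : ContDiff ℝ 4 f) (K : ℝ)
    (h : ∀ t, -iteratedDeriv 4 f t ≤ 24 * K) (y : ℝ) (hy : y ^ 2 = 1) :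
    f 0 + iteratedDeriv 1 f 0 * y + iteratedDeriv 2 f 0 / 2 + iteratedDeriv 3 f 0 * y / 6 - K
      ≤ f y := by
  have hy0 : (0 : ℝ) ≠ y := by rintro rfl; norm_num at hy
  obtain ⟨t, -, ht⟩ := taylor_mean_remainder_lagrange_iteratedDeriv (n := 3) hy0
    (f := f) (by exact_mod_cast hf.contDiffOn)
  have hw : ∀ k : ℕ, k ≤ 4 → iteratedDerivWithin k f (Set.uIcc 0 y) 0 = iteratedDeriv k f 0 := by
    intro k hk
    exact iteratedDerivWithin_eq_iteratedDeriv (uniqueDiffOn_uIcc hy0)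
      (hf.contDiffAt.of_le (by exact_mod_cast hk)) Set.left_mem_uIcc
  rw [taylor_within_apply] at ht
  simp only [Finset.sum_range_succ, Finset.sum_range_zero] at ht
  rw [hw 0 (by norm_num), hw 1 (by norm_num), hw 2 (by norm_num), hw 3 (by norm_num)] at ht
  have h3 : y ^ 3 = y := by rw [pow_succ, hy, one_mul]
  have h4 : y ^ 4 = 1 := by rw [show y ^ 4 = (y ^ 2) ^ 2 by ring, hy]; norm_num
  simp [Nat.factorial, hy, h3, h4] at ht
  rw [iteratedDeriv_one]
  have := h t
  linarith

lemma aux_taylor2 {N : ℕ} (u : (Fin N → ℝ) → ℝ) (hu : ContDiff ℝ 4 u) (x q : Fin N → ℝ)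
    (K : ℝ) (h : ∀ y, -iteratedFDeriv ℝ 4 u y ![q, q, q, q] ≤ 24 * K) :
    2 * u x + iteratedFDeriv ℝ 2 u x ![q, q] - 2 * K ≤ u (x + q) + u (x - q) := by
  have hf : ContDiff ℝ 4 (fun s : ℝ => u (x + s • q)) := by fun_prop
  have e4 : (![q, q, q, q] : Fin 4 → Fin N → ℝ) = fun _ => q := by
    ext i j; fin_cases i <;> rfl
  have e2 : (![q, q] : Fin 2 → Fin N → ℝ) = fun _ => q := by
    ext i j; fin_cases i <;> rfl
  rw [e4] at h
  rw [e2]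
  have h' : ∀ t, -iteratedDeriv 4 (fun s : ℝ => u (x + s • q)) t ≤ 24 * K := by
    intro t
    rw [aux_iter u hu x q 4 le_rfl]
    exact h _
  have a1 := aux_taylor1 _ hf K h' 1 (by norm_num)
  have a2 := aux_taylor1 _ hf K h' (-1) (by norm_num)
  have h2 := aux_iter u hu x q 2 (by norm_num) 0
  simp only [zero_smul, add_zero, one_smul, neg_smul, ← sub_eq_add_neg] at a1 a2 h2
  rw [h2] at a1 a2
  linarith

/-- Continuous functions are integrable against measures on the cube. -/
lemma aux_int {N : ℕ} (a : Measure (Fin N → ℝ)) [IsProbabilityMeasure a]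
    (ha : ∀ᵐ q ∂a, ∀ i, q i ∈ Set.Icc (-1 : ℝ) 1) (f : (Fin N → ℝ) → ℝ) (hf : Continuous f) :
    Integrable f a := by
  obtain ⟨C, hC⟩ := (isCompact_Icc (a := fun _ : Fin N => (-1 : ℝ)) (b := fun _ => 1)).exists_bound_of_continuousOn
    hf.continuousOn
  refine Integrable.of_bound hf.aestronglyMeasurable C ?_
  filter_upwards [ha] with q hq
  exact hC q ⟨fun i => (hq i).1, fun i => (hq i).2⟩

lemma aux_bdd {N : ℕ} (c : Fin N → ℝ) :
    BddBelow (Set.range fun p : stdSimplex ℝ (Fin N) => ∑ i, (p : Fin N → ℝ) i * c i) := by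
  have : CompactSpace (stdSimplex ℝ (Fin N)) :=
    isCompact_iff_compactSpace.mp (isCompact_stdSimplex ℝ (Fin N))
  refine (isCompact_range ?_).bddBelow
  refine continuous_finsetSum _ fun i _ => Continuous.mul ?_ continuous_const
  exact (continuous_apply i).comp continuous_subtype_val

lemma aux_vecMax {N : ℕ} (hN : 2 ≤ N) (x y : Fin N → ℝ) : vecMax x ≤ vecMax y + dist x y := by
  have : Nonempty (Fin N) := ⟨⟨0, by omega⟩⟩
  refine ciSup_le fun i => ?_
  have h1 : y i ≤ vecMax y := le_ciSup (Set.finite_range y).bddAbove i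
  have h2 : dist (x i) (y i) ≤ dist x y := dist_le_pi_dist x y i
  rw [Real.dist_eq] at h2
  have := le_abs_self (x i - y i)
  linarith

lemma aux_lip {N : ℕ} (hN : 2 ≤ N) (δ : ℝ) (hδ : δ ∈ Set.Ioo (0 : ℝ) 1)
    (a : Measure (Fin N → ℝ)) [IsProbabilityMeasure a]
    (ha : ∀ᵐ q ∂a, ∀ i, q i ∈ Set.Icc (-1 : ℝ) 1) (n : ℕ) :
    ∀ x y, gVal δ a n x ≤ gVal δ a n y + dist x y := by
  have : Nonempty (Fin N) := ⟨⟨0, by omega⟩⟩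
  induction n with
  | zero => exact aux_vecMax hN
  | succ n ih =>
    intro x y
    have hc : Continuous (gVal δ a n) := by
      refine (LipschitzWith.of_le_add ih).continuous
    have key : (⨅ p : stdSimplex ℝ (Fin N),
          ∑ i, (p : Fin N → ℝ) i * ∫ q, gVal δ a n (fun j => x j + q i - q j) ∂a)
        ≤ (⨅ p : stdSimplex ℝ (Fin N),
          ∑ i, (p : Fin N → ℝ) i * ∫ q, gVal δ a n (fun j => y j + q i - q j) ∂a)
          + dist x y := by
      rw [← sub_le_iff_le_add]
      refine le_ciInf fun p => ?_
      rw [sub_le_iff_le_add]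
      refine (ciInf_le (aux_bdd _) p).trans ?_
      have hp : dist x y = ∑ i, (p : Fin N → ℝ) i * dist x y := by
        have hp1 : ∑ i, (p : Fin N → ℝ) i = 1 := p.2.2
        rw [← Finset.sum_mul, hp1, one_mul]
      rw [hp, ← Finset.sum_add_distrib]
      refine Finset.sum_le_sum fun i _ => ?_
      rw [← mul_add]
      refine mul_le_mul_of_nonneg_left ?_ (p.2.1 i)
      have hi : ∀ z : Fin N → ℝ, Integrable (fun q => gVal δ a n (fun j => z j + q i - q j)) a :=
        fun z => aux_int a ha _ (by fun_prop)
      have e : (∫ q, gVal δ a n (fun j => y j + q i - q j) ∂a) + dist x y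
          = ∫ q, (gVal δ a n (fun j => y j + q i - q j) + dist x y) ∂a := by
        rw [integral_add (hi y) (integrable_const _)]; simp
      rw [e]
      refine integral_mono (hi x) ((hi y).add (integrable_const _)) fun q => ?_
      refine (ih _ (fun j => y j + q i - q j)).trans ?_
      gcongr
      rw [dist_pi_le_iff dist_nonneg]
      intro j
      simpa [Real.dist_eq] using dist_le_pi_dist x y j
    have h0 := aux_vecMax hN x y
    simp only [gVal]
    nlinarith [mul_le_mul_of_nonneg_left key (sub_nonneg.2 hδ.2.le),
      mul_le_mul_of_nonneg_left h0 hδ.1.le]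

lemma aux_symm {N : ℕ} (a : Measure (Fin N → ℝ))
    (ha_symm : Measure.map (fun q => -q) a = a) (f : (Fin N → ℝ) → ℝ) (hf : Continuous f) :
    ∫ q, f (-q) ∂a = ∫ q, f q ∂a := by
  conv_rhs => rw [← ha_symm]
  rw [integral_map (by fun_prop) hf.aestronglyMeasurable]

theorem geometric_horizon_lower_bound_symmetric
    {N : ℕ} (hN : 2 ≤ N) (δ : ℝ) (hδ : δ ∈ Set.Ioo (0 : ℝ) 1)
    (a : Measure (Fin N → ℝ)) [IsProbabilityMeasure a]
    (ha_supp : ∀ᵐ q ∂a, ∀ i, q i ∈ Set.Icc (-1 : ℝ) 1)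
    (ha_symm : Measure.map (fun q => -q) a = a)
    (uhat : (Fin N → ℝ) → ℝ) (hu : ContDiff ℝ 4 uhat)
    (hlin : ∀ (x : Fin N → ℝ) (c : ℝ), uhat (fun j => x j + c) = uhat x + c)
    (hsub : ∀ x, uhat x ≤ vecMax x +
      (1 - δ) / (2 * δ) * ∫ q, iteratedFDeriv ℝ 2 uhat x ![q, q] ∂a)
    (E₀ : ℝ) (hE₀ : 0 ≤ E₀) (hbound : ∀ x, uhat x - vecMax x ≤ E₀)
    (K : ℝ) (hK : 0 ≤ K)
    (hD4 : ∀ᵐ q ∂a, ∀ y, -iteratedFDeriv ℝ 4 uhat y ![q, q, q, q] ≤ 24 * K) :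
    ∀ (x : Fin N → ℝ) (n : ℕ),
      uhat x - ((1 - δ) ^ n * E₀ + ∑ τ ∈ Finset.Icc 1 n, (1 - δ) ^ τ * K)
        ≤ gVal δ a n x := by
  have : Nonempty (Fin N) := ⟨⟨0, by omega⟩⟩
  intro x n
  induction n generalizing x with
  | zero =>
    have := hbound x
    simp [gVal]
    linarith
  | succ n ih =>
    set E := (1 - δ) ^ n * E₀ + ∑ τ ∈ Finset.Icc 1 n, (1 - δ) ^ τ * K with hE
    have hEs : (1 - δ) ^ (n + 1) * E₀ + ∑ τ ∈ Finset.Icc 1 (n + 1), (1 - δ) ^ τ * K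
        = (1 - δ) * (E + K) := by
      have : ∑ τ ∈ Finset.Icc 1 (n + 1), (1 - δ) ^ τ * K
          = (1 - δ) * K + (1 - δ) * ∑ τ ∈ Finset.Icc 1 n, (1 - δ) ^ τ * K := by
        clear_value E
        clear hE ih
        induction n with
        | zero => simp
        | succ m ihm =>
          have e1 := Finset.sum_Icc_succ_top (a := 1) (b := m) (by omega) (fun τ => (1 - δ) ^ τ * K)
          rw [Finset.sum_Icc_succ_top (by omega), ihm, ← ihm, e1]
          rw [e1] at ihm
          linear_combination ihm
      rw [this, hE]; ring
    have hc : Continuous (gVal δ a n) :=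
      (LipschitzWith.of_le_add (aux_lip hN δ hδ a ha_supp n)).continuous
    have huc : Continuous uhat := hu.continuous
    have hD2c : Continuous fun q : Fin N → ℝ => iteratedFDeriv ℝ 2 uhat x ![q, q] := by
      refine (iteratedFDeriv ℝ 2 uhat x).cont.comp ?_
      fun_prop
    have hI : ∀ f : (Fin N → ℝ) → ℝ, Continuous f → Integrable f a := aux_int a ha_supp
    -- Taylor bound
    have hT : uhat x + (∫ q, iteratedFDeriv ℝ 2 uhat x ![q, q] ∂a) / 2 - K
        ≤ ∫ q, uhat (x - q) ∂a := by
      have h1 : ∫ q, (2 * uhat x + iteratedFDeriv ℝ 2 uhat x ![q, q] - 2 * K) ∂a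
          ≤ ∫ q, (uhat (x + q) + uhat (x - q)) ∂a := by
        refine integral_mono_ae (hI _ (by fun_prop)) (hI _ (by fun_prop)) ?_
        filter_upwards [hD4] with q hq
        exact aux_taylor2 uhat hu x q K hq
      rw [integral_sub (hI _ (by fun_prop)) (hI _ (by fun_prop)),
        integral_add (hI _ (by fun_prop)) (hI _ (by fun_prop)),
        integral_add (hI _ (by fun_prop)) (hI _ (by fun_prop))] at h1
      have h2 := aux_symm a ha_symm (fun q => uhat (x + q)) (by fun_prop)
      simp only [← sub_eq_add_neg] at h2
      simp at h1
      linarith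
    have hmean : ∀ i, ∫ q : Fin N → ℝ, q i ∂a = 0 := by
      intro i
      have h2 := aux_symm a ha_symm (fun q => q i) (by fun_prop)
      simp only [Pi.neg_apply, integral_neg] at h2
      linarith
    have hinf : (∫ q, uhat (x - q) ∂a) - E ≤ ⨅ p : stdSimplex ℝ (Fin N),
          ∑ i, (p : Fin N → ℝ) i * ∫ q, gVal δ a n (fun j => x j + q i - q j) ∂a := by
      refine le_ciInf fun p => ?_
      have hp : (∫ q, uhat (x - q) ∂a) - E
          = ∑ i, (p : Fin N → ℝ) i * ((∫ q, uhat (x - q) ∂a) - E) := by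
        have hp1 : ∑ i, (p : Fin N → ℝ) i = 1 := p.2.2
        rw [← Finset.sum_mul, hp1, one_mul]
      rw [hp]
      refine Finset.sum_le_sum fun i _ => mul_le_mul_of_nonneg_left ?_ (p.2.1 i)
      have e : (∫ q, uhat (x - q) ∂a) - E = ∫ q, (uhat (x - q) + q i - E) ∂a := by
        rw [integral_sub (hI _ (by fun_prop)) (hI _ (by fun_prop)),
          integral_add (hI _ (by fun_prop)) (hI _ (by fun_prop)), hmean]
        simp
      rw [e]
      refine integral_mono (hI _ (by fun_prop)) (hI _ (by fun_prop)) fun q => ?_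
      have h3 := ih (fun j => x j + q i - q j)
      have h4 := hlin (x - q) (q i)
      have h5 : (fun j => (x - q) j + q i) = fun j => x j + q i - q j := by
        ext j; simp; ring
      rw [h5] at h4
      rw [h4] at h3
      exact h3
    rw [hEs]
    simp only [gVal]
    have hs := mul_le_mul_of_nonneg_left (hsub x) hδ.1.le
    have hδ0 : δ ≠ 0 := hδ.1.ne'
    have e2 : δ * (vecMax x + (1 - δ) / (2 * δ) * ∫ q, iteratedFDeriv ℝ 2 uhat x ![q, q] ∂a)
        = δ * vecMax x + (1 - δ) * ((∫ q, iteratedFDeriv ℝ 2 uhat x ![q, q] ∂a) / 2) := by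
      field_simp
    rw [e2] at hs
    have hm := mul_le_mul_of_nonneg_left (hinf.trans' (sub_le_sub_right hT E))
      (sub_nonneg.2 hδ.2.le)
    linarith
end

section
/- Let N ≥ 2, κ > 0, and δ > 0. Then for every x ∈ ℝ^N, max_i x_i ≤ ψ(x,−δ) ≤ max_i x_i + 2√(κδ/π) · (N−1)/N, where ψ(x,−δ) = (1/N) Σ_{i=1}^N x_{(i)} + √(2κδ) Σ_{l=1}^{N−1} c_l f(z_l) with z_l = (Σ_{n=1}^l x_{(n)} − l x_{(l+1)})/√(2κδ). -/
open MeasureTheory Real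

/-- The error function `erf(y) = (2/√π) ∫_0^y e^{-s²} ds`. -/
noncomputable def erf (y : ℝ) : ℝ :=
  (2 / Real.sqrt Real.pi) * ∫ s in (0 : ℝ)..y, Real.exp (-s ^ 2)

/-- `f(z) = √(2/π) e^(-z²/2) + z · erf(z/√2)`. -/
noncomputable def fAux (z : ℝ) : ℝ :=
  Real.sqrt (2 / Real.pi) * Real.exp (-z ^ 2 / 2) + z * erf (z / Real.sqrt 2)

/-- `ranked x l` is the `l`-th largest coordinate `x_{(l)}` of `x` (1-based index). -/
noncomputable def ranked {N : ℕ} (x : Fin N → ℝ) (l : ℕ) : ℝ :=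
  if h : l - 1 < N then x (Tuple.sort x (Fin.rev ⟨l - 1, h⟩)) else 0

/-- The max potential
`ψ(x,t) = (1/N) Σ_i x_{(i)} + √(-2κt) Σ_{l=1}^{N-1} c_l f(z_l)` with
`c_l = 1/(l(l+1))` and `z_l = (Σ_{n=1}^l x_{(n)} - l x_{(l+1)})/√(-2κt)`. -/
noncomputable def maxPot (N : ℕ) (κ : ℝ) (x : Fin N → ℝ) (t : ℝ) : ℝ :=
  (1 / (N : ℝ)) * ∑ i ∈ Finset.Icc 1 N, ranked x i +
    Real.sqrt (-2 * κ * t) * ∑ l ∈ Finset.Icc 1 (N - 1),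
      (1 / ((l : ℝ) * ((l : ℝ) + 1))) *
        fAux (((∑ n ∈ Finset.Icc 1 l, ranked x n) - (l : ℝ) * ranked x (l + 1)) /
          Real.sqrt (-2 * κ * t))


theorem erf_compl (y : ℝ) :
    (∫ s in (0 : ℝ)..y, Real.exp (-s ^ 2)) + (∫ s in Set.Ioi y, Real.exp (-s ^ 2))
      = Real.sqrt Real.pi / 2 := by
  have hint : Integrable (fun s : ℝ => Real.exp (-s ^ 2)) := by
    simpa using integrable_exp_neg_mul_sq (b := 1) one_pos
  have h := integral_gaussian_Ioi 1
  simp only [neg_mul, one_mul, div_one] at h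
  rw [← h]
  exact intervalIntegral.integral_interval_add_Ioi hint.integrableOn hint.integrableOn

theorem tail_bound (y : ℝ) :
    2 * y * (∫ s in Set.Ioi y, Real.exp (-s ^ 2)) ≤ Real.exp (-y ^ 2) := by
  have hint : Integrable (fun s : ℝ => Real.exp (-s ^ 2)) := by
    simpa using integrable_exp_neg_mul_sq (b := 1) one_pos
  have hint2 : Integrable (fun s : ℝ => 2 * s * Real.exp (-s ^ 2)) := by
    have := (integrable_mul_exp_neg_mul_sq (b := 1) one_pos).const_mul 2
    simpa [mul_assoc] using this
  have hd : ∀ s ∈ Set.Ici y, HasDerivAt (fun s : ℝ => -Real.exp (-s ^ 2))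
      (2 * s * Real.exp (-s ^ 2)) s := by
    intro s _
    have h1 : HasDerivAt (fun s : ℝ => -s ^ 2) (-(2 * s)) s := by
      have h0 := (hasDerivAt_pow 2 s).fun_neg
      exact h0.congr_deriv (by simp)
    exact h1.exp.fun_neg.congr_deriv (by ring)
  have ht : Filter.Tendsto (fun s : ℝ => -Real.exp (-s ^ 2)) Filter.atTop (nhds (-0)) := by
    apply Filter.Tendsto.neg
    apply Real.tendsto_exp_atBot.comp
    exact Filter.tendsto_neg_atTop_atBot.comp (Filter.tendsto_pow_atTop two_ne_zero)
  have h := integral_Ioi_of_hasDerivAt_of_tendsto' hd hint2.integrableOn ht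
  rw [← integral_const_mul]
  have h2 : Real.exp (-y ^ 2) = ∫ s in Set.Ioi y, 2 * s * Real.exp (-s ^ 2) := by
    rw [h]; ring
  rw [h2]
  apply setIntegral_mono_on (hint.const_mul _).integrableOn hint2.integrableOn measurableSet_Ioi
  intro s hs
  have : y < s := hs
  gcongr

theorem fAux_bounds (z : ℝ) (hz : 0 ≤ z) :
    z ≤ fAux z ∧ fAux z ≤ z + Real.sqrt (2 / Real.pi) := by
  have hp : 0 < Real.sqrt Real.pi := Real.sqrt_pos.2 Real.pi_pos
  have h2 : 0 < Real.sqrt 2 := Real.sqrt_pos.2 two_pos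
  have hs2 : Real.sqrt 2 * Real.sqrt 2 = 2 := Real.mul_self_sqrt two_pos.le
  set y := z / Real.sqrt 2 with hy
  have hzy : z = Real.sqrt 2 * y := by rw [hy]; field_simp
  have hy2 : -z ^ 2 / 2 = -y ^ 2 := by
    rw [hzy]; linear_combination (-y^2/2) * hs2
  have hc := erf_compl y
  have hb := tail_bound y
  have hJ : 0 ≤ ∫ s in Set.Ioi y, Real.exp (-s ^ 2) :=
    integral_nonneg (fun s => (Real.exp_pos _).le)
  set J := ∫ s in Set.Ioi y, Real.exp (-s ^ 2)
  have herf : erf y = 1 - 2 / Real.sqrt Real.pi * J := by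
    unfold erf
    rw [eq_sub_of_add_eq hc]; field_simp
  unfold fAux
  rw [← hy, hy2, herf, Real.sqrt_div two_pos.le]
  have e1 : z * (1 - 2 / Real.sqrt Real.pi * J) =
      z - Real.sqrt 2 / Real.sqrt Real.pi * (2 * y * J) := by
    rw [hzy]; field_simp
  have hk : 0 ≤ Real.sqrt 2 / Real.sqrt Real.pi := by positivity
  rw [e1]
  constructor
  · have := mul_le_mul_of_nonneg_left hb hk
    linarith
  · have hy0 : 0 ≤ y := by positivity
    have h3 : 0 ≤ Real.sqrt 2 / Real.sqrt Real.pi * (2 * y * J) := by positivity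
    have h4 : Real.exp (-y ^ 2) ≤ 1 := Real.exp_le_one_iff.2 (by nlinarith [sq_nonneg y])
    have := mul_le_mul_of_nonneg_left h4 hk
    linarith

theorem max_identity (r : ℕ → ℝ) (k : ℕ) :
    r 1 = (1 / ((k : ℝ) + 1)) * ∑ i ∈ Finset.Icc 1 (k + 1), r i +
      ∑ l ∈ Finset.Icc 1 k, (1 / ((l : ℝ) * ((l : ℝ) + 1))) *
        ((∑ n ∈ Finset.Icc 1 l, r n) - (l : ℝ) * r (l + 1)) := by
  induction k with
  | zero => simp
  | succ k ih =>
    rw [Finset.sum_Icc_succ_top (by omega : 1 ≤ k + 1 + 1),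
      Finset.sum_Icc_succ_top (by omega : 1 ≤ k + 1)
        (fun l : ℕ => (1 / ((l : ℝ) * ((l : ℝ) + 1))) *
          ((∑ n ∈ Finset.Icc 1 l, r n) - (l : ℝ) * r (l + 1)))]
    generalize (∑ l ∈ Finset.Icc 1 k, (1 / ((l : ℝ) * ((l : ℝ) + 1))) *
        ((∑ n ∈ Finset.Icc 1 l, r n) - (l : ℝ) * r (l + 1))) = T at ih ⊢
    generalize (∑ i ∈ Finset.Icc 1 (k + 1), r i) = S at ih ⊢
    rw [ih]
    push_cast
    have h1 : (k : ℝ) + 1 ≠ 0 := by positivity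
    have h2 : (k : ℝ) + 1 + 1 ≠ 0 := by positivity
    field_simp
    ring

theorem sum_c (k : ℕ) :
    ∑ l ∈ Finset.Icc 1 k, (1 / ((l : ℝ) * ((l : ℝ) + 1))) = k / ((k : ℝ) + 1) := by
  induction k with
  | zero => simp
  | succ k ih =>
    rw [Finset.sum_Icc_succ_top (by omega : 1 ≤ k + 1), ih]
    push_cast
    have h1 : (k : ℝ) + 1 ≠ 0 := by positivity
    have h2 : (k : ℝ) + 1 + 1 ≠ 0 := by positivity
    field_simp
    ring

theorem ranked_anti {N : ℕ} (x : Fin N → ℝ) {a b : ℕ} (hab : a ≤ b) (hb : b - 1 < N) :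
    ranked x b ≤ ranked x a := by
  have ha : a - 1 < N := by omega
  unfold ranked
  rw [dif_pos ha, dif_pos hb]
  apply Tuple.monotone_sort x
  rw [Fin.rev_le_rev, Fin.mk_le_mk]
  omega

theorem ranked_one {N : ℕ} (hN : 0 < N) (x : Fin N → ℝ) : ranked x 1 = ⨆ i, x i := by
  have : Nonempty (Fin N) := ⟨⟨0, hN⟩⟩
  have h1 : 1 - 1 < N := by omega
  have hbdd : BddAbove (Set.range x) := (Set.finite_range x).bddAbove
  apply le_antisymm
  · unfold ranked
    rw [dif_pos h1]
    exact le_ciSup hbdd _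
  · apply ciSup_le
    intro i
    unfold ranked
    rw [dif_pos h1]
    have := Tuple.monotone_sort x
      (show (Tuple.sort x).symm i ≤ Fin.rev ⟨1 - 1, h1⟩ by
        rw [Fin.le_def, Fin.val_rev]
        have := ((Tuple.sort x).symm i).isLt
        simp only
        omega)
    simpa using this

theorem maxPot_final_time_bound
    (N : ℕ) (hN : 2 ≤ N) (κ δ : ℝ) (hκ : 0 < κ) (hδ : 0 < δ) :
    ∀ x : Fin N → ℝ,
      (⨆ i, x i) ≤ maxPot N κ x (-δ) ∧
        maxPot N κ x (-δ) ≤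
          (⨆ i, x i) + 2 * Real.sqrt (κ * δ / Real.pi) * ((N : ℝ) - 1) / (N : ℝ) := by
  intro x
  obtain ⟨k, rfl⟩ : ∃ k, N = k + 1 := ⟨N - 1, by omega⟩
  rw [← ranked_one (by omega) x]
  unfold maxPot
  have harg : -2 * κ * -δ = 2 * (κ * δ) := by ring
  rw [harg, Nat.add_sub_cancel]
  have hκδ : 0 < κ * δ := mul_pos hκ hδ
  set s := Real.sqrt (2 * (κ * δ)) with hs
  have hs0 : 0 < s := Real.sqrt_pos.2 (by positivity)
  have hid := max_identity (ranked x) k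
  have hconst : s * Real.sqrt (2 / Real.pi) = 2 * Real.sqrt (κ * δ / Real.pi) := by
    rw [hs, ← Real.sqrt_mul (by positivity)]
    rw [show 2 * (κ * δ) * (2 / Real.pi) = 2 ^ 2 * (κ * δ / Real.pi) by ring,
      Real.sqrt_mul (by positivity), Real.sqrt_sq (by norm_num)]
  have hz : ∀ l ∈ Finset.Icc 1 k,
      0 ≤ ((∑ n ∈ Finset.Icc 1 l, ranked x n) - (l : ℝ) * ranked x (l + 1)) / s := by
    intro l hl
    rw [Finset.mem_Icc] at hl
    apply div_nonneg _ hs0.le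
    rw [sub_nonneg]
    have := Finset.card_nsmul_le_sum (Finset.Icc 1 l) (ranked x) (ranked x (l + 1))
      (fun n hn => ranked_anti x (by rw [Finset.mem_Icc] at hn; omega) (by omega))
    simpa using this
  have hid2 : ∑ l ∈ Finset.Icc 1 k, (1 / ((l : ℝ) * ((l : ℝ) + 1))) *
        ((∑ n ∈ Finset.Icc 1 l, ranked x n) - (l : ℝ) * ranked x (l + 1)) =
      s * ∑ l ∈ Finset.Icc 1 k, (1 / ((l : ℝ) * ((l : ℝ) + 1))) *
        (((∑ n ∈ Finset.Icc 1 l, ranked x n) - (l : ℝ) * ranked x (l + 1)) / s) := by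
    rw [Finset.mul_sum]
    refine Finset.sum_congr rfl fun l _ => ?_
    rw [mul_left_comm, mul_div_cancel₀ _ hs0.ne']
  rw [hid2] at hid
  push_cast
  constructor
  · rw [hid]
    gcongr with l hl
    exact (fAux_bounds _ (hz l hl)).1
  · have hub : ∑ l ∈ Finset.Icc 1 k, (1 / ((l : ℝ) * ((l : ℝ) + 1))) *
        fAux (((∑ n ∈ Finset.Icc 1 l, ranked x n) - (l : ℝ) * ranked x (l + 1)) / s) ≤
      (∑ l ∈ Finset.Icc 1 k, (1 / ((l : ℝ) * ((l : ℝ) + 1))) *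
        (((∑ n ∈ Finset.Icc 1 l, ranked x n) - (l : ℝ) * ranked x (l + 1)) / s)) +
      (k / ((k : ℝ) + 1)) * Real.sqrt (2 / Real.pi) := by
      rw [← sum_c, Finset.sum_mul, ← Finset.sum_add_distrib]
      refine Finset.sum_le_sum fun l hl => ?_
      rw [← mul_add]
      exact mul_le_mul_of_nonneg_left (fAux_bounds _ (hz l hl)).2 (by positivity)
    have h5 := mul_le_mul_of_nonneg_left hub hs0.le
    have h6 : s * ((k / ((k : ℝ) + 1)) * Real.sqrt (2 / Real.pi)) =
        2 * Real.sqrt (κ * δ / Real.pi) * ((k : ℝ) + 1 - 1) / ((k : ℝ) + 1) := by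
      rw [← hconst]; ring
    rw [mul_add, h6] at h5
    linarith
end
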